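/- arXiv:2310.20007 — 2 statements merged into one kernel-verified Lean document; each statement's English description precedes it below -/
import Mathlib

section
/- Let Θ be a set of time-inhomogeneous tabular environments on common state space S, action space A and horizon H, with a fixed initial state s₁, and let E ↦ π*_E be a choice of optimal policy for each E ∈ Θ (i.e., V_{1,π}^{E}(s₁) ≤ V_{1,π*_E}^{E}(s₁) for every policy π). Suppose for each h = 1,…,H the family {P_h^{E} : E ∈ Θ} admits a finite subset C_h^P of cardinality L_h^P that is an (ε/(4H²))-cover in the metric l1(P,P') = max_{(s,a)} Σ_{s'} |P(s'|s,a) − P'(s'|s,a)|, and the family {r_h^{E} : E ∈ Θ} admits a finite subset C_h^R of cardinality L_h^R that is an (ε/(4H))-cover in the metric max_{(s,a)} |r(s,a) − r'(s,a)|. Then there exists a layered ε-value partition of Θ with at most Π_{h=1}^{H} L_h^P · L_h^R classes; that is, a partition {Θ_k} of Θ such that (i) each class Θ_k has the form {E ∈ Θ : P_h^{E} ∈ A_{k,h} and r_h^{E} ∈ B_{k,h} for all h} for some sets A_{k,h}, B_{k,h}, and (ii) for every k and all E, E' ∈ Θ_k, V_{1,π*_E}^{E}(s₁) − V_{1,π*_E}^{E'}(s₁)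 ≤ ε. -/
open Finset

/-- A tabular environment: a pair of (time-indexed) transition kernels and rewards. -/
abbrev Env (S A : Type*) := (ℕ → S → A → S → ℝ) × (ℕ → S → A → ℝ)

variable {S A : Type*}

/-- Value function: `val H P r pol k s` is the value at the layer with `k` steps
remaining (i.e. at layer `H + 1 - k`); thus `val H P r pol H s₁` is `V_{1,π}(s₁)`. -/
noncomputable def val [Fintype S] [Fintype A] (H : ℕ) (P : ℕ → S → A → S → ℝ)
    (r : ℕ → S → A → ℝ) (pol : ℕ → S → A → ℝ) : ℕ → S → ℝ
  | 0 => fun _ => 0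
  | (k + 1) => fun s => ∑ a, pol (H - k) s a *
      (r (H - k) s a + ∑ s', P (H - k) s a s' * val H P r pol k s')

/-- Each `P h (· | s,a)`, `h = 1,…,H`, is a probability distribution on `S`. -/
def IsKernel [Fintype S] [Fintype A] (H : ℕ) (P : ℕ → S → A → S → ℝ) : Prop :=
  ∀ h ∈ Finset.Icc 1 H, ∀ s a, (∀ s', 0 ≤ P h s a s') ∧ ∑ s', P h s a s' = 1

/-- Each mean reward `r h s a`, `h = 1,…,H`, lies in `[0,1]`. -/
def IsReward (H : ℕ) (r : ℕ → S → A → ℝ) : Prop :=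
  ∀ h ∈ Finset.Icc 1 H, ∀ (s : S) (a : A), 0 ≤ r h s a ∧ r h s a ≤ 1

/-- Each `pol h (· | s)`, `h = 1,…,H`, is a probability distribution on `A`. -/
def IsPolicy [Fintype A] (H : ℕ) (pol : ℕ → S → A → ℝ) : Prop :=
  ∀ h ∈ Finset.Icc 1 H, ∀ s : S, (∀ a, 0 ≤ pol h s a) ∧ ∑ a, pol h s a = 1

lemma val_bounds [Fintype S] [Fintype A] (H : ℕ) (P : ℕ → S → A → S → ℝ)
    (r : ℕ → S → A → ℝ) (pol : ℕ → S → A → ℝ) (hP : IsKernel H P) (hr : IsReward H r)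
    (hpol : IsPolicy H pol) (k : ℕ) (hk : k ≤ H) (s : S) :
    0 ≤ val H P r pol k s ∧ val H P r pol k s ≤ k := by
  induction k generalizing s with
  | zero => simp [_root_.val]
  | succ k ih =>
    have ih := ih (by omega)
    have hm : H - k ∈ Finset.Icc 1 H := by simp; omega
    obtain ⟨hp0, hp1⟩ := hpol _ hm s
    have key : ∀ a, 0 ≤ r (H - k) s a + ∑ s', P (H - k) s a s' * val H P r pol k s' ∧
        r (H - k) s a + ∑ s', P (H - k) s a s' * val H P r pol k s' ≤ (k + 1 : ℝ) := by
      intro a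
      obtain ⟨h0, h1⟩ := hP _ hm s a
      obtain ⟨r0, r1⟩ := hr _ hm s a
      have e1 : 0 ≤ ∑ s', P (H - k) s a s' * val H P r pol k s' :=
        Finset.sum_nonneg fun s' _ => mul_nonneg (h0 s') (ih s').1
      have e2 : ∑ s', P (H - k) s a s' * val H P r pol k s' ≤ ∑ s', P (H - k) s a s' * k :=
        Finset.sum_le_sum fun s' _ => mul_le_mul_of_nonneg_left (ih s').2 (h0 s')
      rw [← Finset.sum_mul, h1] at e2
      constructor <;> linarith
    simp only [_root_.val]
    refine ⟨Finset.sum_nonneg fun a _ => mul_nonneg (hp0 a) (key a).1, ?_⟩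
    calc _ ≤ ∑ a, pol (H - k) s a * (k + 1 : ℝ) :=
          Finset.sum_le_sum fun a _ => mul_le_mul_of_nonneg_left (key a).2 (hp0 a)
      _ = _ := by rw [← Finset.sum_mul, hp1]; push_cast; ring

lemma val_diff [Fintype S] [Fintype A] (H : ℕ) (P P' : ℕ → S → A → S → ℝ)
    (r r' : ℕ → S → A → ℝ) (pol : ℕ → S → A → ℝ) (hP : IsKernel H P)
    (hP' : IsKernel H P') (hr' : IsReward H r')
    (hpol : IsPolicy H pol) (x y : ℝ)
    (hx : ∀ h ∈ Finset.Icc 1 H, ∀ s a, ∑ s', |P h s a s' - P' h s a s'| ≤ x)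
    (hx0 : 0 ≤ x)
    (hy : ∀ h ∈ Finset.Icc 1 H, ∀ s a, |r h s a - r' h s a| ≤ y)
    (k : ℕ) (hk : k ≤ H) (s : S) :
    val H P r pol k s - val H P' r' pol k s ≤ k * (y + H * x) := by
  induction k generalizing s with
  | zero => simp [_root_.val]
  | succ k ih =>
    have ih := ih (by omega)
    have hm : H - k ∈ Finset.Icc 1 H := by simp; omega
    obtain ⟨hp0, hp1⟩ := hpol _ hm s
    have hkH : (k : ℝ) ≤ H := by exact_mod_cast (by omega : k ≤ H)
    have key : ∀ a, (r (H - k) s a + ∑ s', P (H - k) s a s' * val H P r pol k s') -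
        (r' (H - k) s a + ∑ s', P' (H - k) s a s' * val H P' r' pol k s') ≤
        (k + 1 : ℝ) * (y + H * x) := by
      intro a
      obtain ⟨h0, h1⟩ := hP _ hm s a
      have hry := (abs_le.1 (hy _ hm s a)).2
      have e0 : ∑ s', P (H - k) s a s' * val H P r pol k s' -
          ∑ s', P' (H - k) s a s' * val H P' r' pol k s' =
          ∑ s', P (H - k) s a s' * (val H P r pol k s' - val H P' r' pol k s') +
          ∑ s', (P (H - k) s a s' - P' (H - k) s a s') * val H P' r' pol k s' := by
        rw [← Finset.sum_sub_distrib, ← Finset.sum_add_distrib]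
        exact Finset.sum_congr rfl fun s' _ => by ring
      have e1 : ∑ s', P (H - k) s a s' * (val H P r pol k s' - val H P' r' pol k s') ≤
          ∑ s', P (H - k) s a s' * (k * (y + H * x)) :=
        Finset.sum_le_sum fun s' _ => mul_le_mul_of_nonneg_left (ih s') (h0 s')
      rw [← Finset.sum_mul, h1] at e1
      have e2 : ∑ s', (P (H - k) s a s' - P' (H - k) s a s') * val H P' r' pol k s' ≤
          ∑ s', |P (H - k) s a s' - P' (H - k) s a s'| * H := by
        refine Finset.sum_le_sum fun s' _ => ?_
        obtain ⟨b0, b1⟩ := val_bounds H P' r' pol hP' hr' hpol k (by omega) s'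
        exact mul_le_mul (le_abs_self _) (b1.trans hkH) b0 (abs_nonneg _)
      rw [← Finset.sum_mul] at e2
      have e3 := mul_le_mul_of_nonneg_right (hx _ hm s a) (Nat.cast_nonneg (α := ℝ) H)
      linarith
    simp only [_root_.val]
    rw [← Finset.sum_sub_distrib]
    calc _ ≤ ∑ a, pol (H - k) s a * ((k + 1 : ℝ) * (y + H * x)) := by
          refine Finset.sum_le_sum fun a _ => ?_
          rw [← mul_sub]
          exact mul_le_mul_of_nonneg_left (key a) (hp0 a)
      _ = _ := by rw [← Finset.sum_mul, hp1]; push_cast; ring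

/-- existence of a layered ε-value partition from layerwise
`l1`-covers of the transition and reward families. -/
theorem layered_value_partition_of_covers
    [Fintype S] [Fintype A] [Nonempty S] [Nonempty A]
    (H : ℕ) (hH : 1 ≤ H) (s₁ : S) (ε : ℝ) (hε : 0 < ε)
    (Θ : Set (Env S A))
    (hΘ : ∀ E ∈ Θ, IsKernel H E.1 ∧ IsReward H E.2)
    (πstar : Env S A → (ℕ → S → A → ℝ))
    (hπstar : ∀ E ∈ Θ, IsPolicy H (πstar E))
    (hopt : ∀ E ∈ Θ, ∀ pol, IsPolicy H pol →
      val H E.1 E.2 pol H s₁ ≤ val H E.1 E.2 (πstar E) H s₁)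
    (CP : ℕ → Finset (S → A → S → ℝ)) (CR : ℕ → Finset (S → A → ℝ))
    (LP LR : ℕ → ℕ)
    (hCP : ∀ h ∈ Finset.Icc 1 H, (CP h).card = LP h ∧
      ∀ E ∈ Θ, ∃ Q ∈ CP h,
        (Finset.univ.sup' Finset.univ_nonempty fun p : S × A =>
          ∑ s', |E.1 h p.1 p.2 s' - Q p.1 p.2 s'|) ≤ ε / (4 * (H : ℝ) ^ 2))
    (hCR : ∀ h ∈ Finset.Icc 1 H, (CR h).card = LR h ∧
      ∀ E ∈ Θ, ∃ q ∈ CR h,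
        (Finset.univ.sup' Finset.univ_nonempty fun p : S × A =>
          |E.2 h p.1 p.2 - q p.1 p.2|) ≤ ε / (4 * (H : ℝ))) :
    ∃ (K : ℕ) (T : Fin K → Set (Env S A))
      (As : Fin K → ℕ → Set (S → A → S → ℝ)) (Bs : Fin K → ℕ → Set (S → A → ℝ)),
      K ≤ ∏ h ∈ Finset.Icc 1 H, LP h * LR h ∧
      (∀ E ∈ Θ, ∃! k, E ∈ T k) ∧
      (∀ k, T k = {E ∈ Θ | ∀ h ∈ Finset.Icc 1 H, E.1 h ∈ As k h ∧ E.2 h ∈ Bs k h}) ∧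
      (∀ k, ∀ E ∈ T k, ∀ E' ∈ T k,
        val H E.1 E.2 (πstar E) H s₁ - val H E'.1 E'.2 (πstar E) H s₁ ≤ ε) := by
  classical
  -- selectors depending only on the layer component
  have hgP : ∀ h (p : S → A → S → ℝ), ∃ Q : S → A → S → ℝ,
      (∃ Q ∈ CP h, (Finset.univ.sup' Finset.univ_nonempty fun z : S × A =>
          ∑ s', |p z.1 z.2 s' - Q z.1 z.2 s'|) ≤ ε / (4 * (H : ℝ) ^ 2)) →
      Q ∈ CP h ∧ (Finset.univ.sup' Finset.univ_nonempty fun z : S × A =>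
          ∑ s', |p z.1 z.2 s' - Q z.1 z.2 s'|) ≤ ε / (4 * (H : ℝ) ^ 2) := by
    intro h p
    by_cases hc : (∃ Q ∈ CP h, (Finset.univ.sup' Finset.univ_nonempty fun z : S × A =>
          ∑ s', |p z.1 z.2 s' - Q z.1 z.2 s'|) ≤ ε / (4 * (H : ℝ) ^ 2))
    · obtain ⟨Q, hQ⟩ := hc
      exact ⟨Q, fun _ => hQ⟩
    · exact ⟨p, fun h => absurd h hc⟩
  have hgR : ∀ h (p : S → A → ℝ), ∃ Q : S → A → ℝ,
      (∃ Q ∈ CR h, (Finset.univ.sup' Finset.univ_nonempty fun z : S × A =>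
          |p z.1 z.2 - Q z.1 z.2|) ≤ ε / (4 * (H : ℝ))) →
      Q ∈ CR h ∧ (Finset.univ.sup' Finset.univ_nonempty fun z : S × A =>
          |p z.1 z.2 - Q z.1 z.2|) ≤ ε / (4 * (H : ℝ)) := by
    intro h p
    by_cases hc : (∃ Q ∈ CR h, (Finset.univ.sup' Finset.univ_nonempty fun z : S × A =>
          |p z.1 z.2 - Q z.1 z.2|) ≤ ε / (4 * (H : ℝ)))
    · obtain ⟨Q, hQ⟩ := hc
      exact ⟨Q, fun _ => hQ⟩
    · exact ⟨p, fun h => absurd h hc⟩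
  choose gP hgP using hgP
  choose gR hgR using hgR
  have hP : ∀ h ∈ Finset.Icc 1 H, ∀ E ∈ Θ, gP h (E.1 h) ∈ CP h ∧
      ∀ s a, ∑ s', |E.1 h s a s' - gP h (E.1 h) s a s'| ≤ ε / (4 * (H : ℝ) ^ 2) := by
    intro h hh E hE
    obtain ⟨h1, h2⟩ := hgP h (E.1 h) ((hCP h hh).2 E hE)
    refine ⟨h1, fun s a => ?_⟩
    exact (Finset.sup'_le_iff _ _).1 h2 (s, a) (Finset.mem_univ _)
  have hR : ∀ h ∈ Finset.Icc 1 H, ∀ E ∈ Θ, gR h (E.2 h) ∈ CR h ∧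
      ∀ s a, |E.2 h s a - gR h (E.2 h) s a| ≤ ε / (4 * (H : ℝ)) := by
    intro h hh E hE
    obtain ⟨h1, h2⟩ := hgR h (E.2 h) ((hCR h hh).2 E hE)
    refine ⟨h1, fun s a => ?_⟩
    exact (Finset.sup'_le_iff _ _).1 h2 (s, a) (Finset.mem_univ _)
  let I := (Finset.Icc 1 H).pi fun h => CP h ×ˢ CR h
  let e : I ≃ Fin I.card := I.equivFin
  let As : Fin I.card → ℕ → Set (S → A → S → ℝ) := fun k h =>
    {p | ∀ hh : h ∈ Finset.Icc 1 H, gP h p = ((e.symm k).1 h hh).1}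
  let Bs : Fin I.card → ℕ → Set (S → A → ℝ) := fun k h =>
    {p | ∀ hh : h ∈ Finset.Icc 1 H, gR h p = ((e.symm k).1 h hh).2}
  refine ⟨I.card,
    fun k => {E ∈ Θ | ∀ h ∈ Finset.Icc 1 H, E.1 h ∈ As k h ∧ E.2 h ∈ Bs k h},
    As, Bs, ?_, ?_, fun k => rfl, ?_⟩
  · refine le_of_eq ?_
    simp only [I, Finset.card_pi, Finset.card_product]
    exact Finset.prod_congr rfl fun h hh => by rw [(hCP h hh).1, (hCR h hh).1]
  · intro E hE
    have hmem : (fun h (_ : h ∈ Finset.Icc 1 H) => (gP h (E.1 h), gR h (E.2 h))) ∈ I := by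
      simp only [I, Finset.mem_pi, Finset.mem_product]
      exact fun h hh => ⟨(hP h hh E hE).1, (hR h hh E hE).1⟩
    refine ⟨e ⟨_, hmem⟩, ⟨hE, fun h hh => ⟨fun hh' => ?_, fun hh' => ?_⟩⟩, ?_⟩
    · simp
    · simp
    · rintro k ⟨-, hk⟩
      rw [← Equiv.symm_apply_eq]
      apply Subtype.ext
      funext h hh
      exact Prod.ext ((hk h hh).1 hh).symm ((hk h hh).2 hh).symm
  · rintro k E ⟨hE, hk⟩ E' ⟨hE', hk'⟩
    have hH0 : (0 : ℝ) < H := by exact_mod_cast hH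
    have hd := val_diff H E.1 E'.1 E.2 E'.2 (πstar E) (hΘ E hE).1 (hΘ E' hE').1 (hΘ E' hE').2
      (hπstar E hE) (ε / (4 * (H : ℝ) ^ 2) + ε / (4 * (H : ℝ) ^ 2))
      (ε / (4 * (H : ℝ)) + ε / (4 * (H : ℝ))) ?_ (by positivity) ?_ H le_rfl s₁
    · refine hd.trans (le_of_eq ?_)
      field_simp
      ring
    · intro h hh s a
      have h1 := (hP h hh E hE).2 s a
      have h2 := (hP h hh E' hE').2 s a
      have heq : gP h (E.1 h) = gP h (E'.1 h) :=
        ((hk h hh).1 hh).trans ((hk' h hh).1 hh).symm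
      rw [← heq] at h2
      refine le_trans ?_ (add_le_add h1 h2)
      rw [← Finset.sum_add_distrib]
      refine Finset.sum_le_sum fun s' _ => ?_
      rw [abs_sub_comm (E'.1 h s a s')]
      exact abs_sub_le _ _ _
    · intro h hh s a
      have h1 := (hR h hh E hE).2 s a
      have h2 := (hR h hh E' hE').2 s a
      have heq : gR h (E.2 h) = gR h (E'.2 h) :=
        ((hk h hh).2 hh).trans ((hk' h hh).2 hh).symm
      rw [← heq] at h2
      refine le_trans ?_ (add_le_add h1 h2)
      rw [abs_sub_comm (E'.2 h s a)]
      exact abs_sub_le _ _ _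
end

section
/- Let Θ be a nonempty finite set of time-inhomogeneous tabular environments on common finite state space S, action space A and horizon H with fixed initial state s₁, let p be a probability measure on Θ, and let E ↦ π*_E assign to each E ∈ Θ a policy maximizing V_{1,·}^{E}(s₁). Let {Θ_k}_{k=1}^{K} be a partition of Θ such that: (i) (ε-value property) for every k and all E, E'' ∈ Θ_k, V_{1,π*_E}^{E}(s₁) − V_{1,π*_E}^{E''}(s₁) ≤ ε; and (ii) (layered property) under the conditional measure p(· | Θ_k), the layers (P_1, r_1), …, (P_H, r_H) are mutually independent. For each k with p(Θ_k) > 0, let Ẽ_k be the conditional mean environment, whose transitions and rewards are the entrywise means of P_h^{E} and r_h^{E} under p(· | Θ_k). Let E and E' be independent Θ-valued random variables each with law p, and let ζ(E) denote the index of the class containing E. Then E[ V_{1,π*_E}^{E}(s₁) − V_{1,π*_{E'}}^{E}(s₁) ] − E[ V_{1,π*_E}^{Ẽ_{ζ(E)}}(s₁) − V_{1,π*_{E'}}^{Ẽ_{ζ(E)}}(s₁) ] ≤ ε. -/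
open Finset

variable {S A : Type*}

/-- Transition kernels of the conditional-mean (surrogate) environment of a class `T`. -/
noncomputable def condP (p : Env S A → ℝ) (T : Finset (Env S A)) :
    ℕ → S → A → S → ℝ :=
  fun h s a s' => (∑ E ∈ T, p E * E.1 h s a s') / (∑ E ∈ T, p E)

/-- Mean rewards of the conditional-mean (surrogate) environment of a class `T`. -/
noncomputable def condR (p : Env S A → ℝ) (T : Finset (Env S A)) :
    ℕ → S → A → ℝ :=
  fun h s a => (∑ E ∈ T, p E * E.2 h s a) / (∑ E ∈ T, p E)

open scoped Classical in
theorem sl_indep_pair {Ω X Y : Type*} (T : Finset Ω) (q : Ω → ℝ) (u : Ω → X) (v : Ω → Y)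
    (huv : ∀ x, ∀ y ∈ T.image v, (∑ E ∈ T, if u E = x ∧ v E = y then q E else 0) =
      (∑ E ∈ T, if u E = x then q E else 0) * (∑ E ∈ T, if v E = y then q E else 0))
    (f : X → ℝ) (g : Y → ℝ) :
    ∑ E ∈ T, q E * (f (u E) * g (v E)) =
      (∑ E ∈ T, q E * f (u E)) * (∑ E ∈ T, q E * g (v E)) := by
  have h1 : ∀ E ∈ T, q E * f (u E) =
      ∑ x ∈ T.image u, f x * (if u E = x then q E else 0) := by
    intro E hE
    rw [Finset.sum_eq_single (u E)]
    · simp [mul_comm]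
    · intro b _ hb
      simp [Ne.symm hb]
    · intro h
      exact absurd (Finset.mem_image_of_mem u hE) h
  have h2 : ∀ E ∈ T, q E * g (v E) =
      ∑ y ∈ T.image v, g y * (if v E = y then q E else 0) := by
    intro E hE
    rw [Finset.sum_eq_single (v E)]
    · simp [mul_comm]
    · intro b _ hb
      simp [Ne.symm hb]
    · intro h
      exact absurd (Finset.mem_image_of_mem v hE) h
  have h3 : ∀ E ∈ T, q E * (f (u E) * g (v E)) =
      ∑ x ∈ T.image u, ∑ y ∈ T.image v,
        f x * g y * (if u E = x ∧ v E = y then q E else 0) := by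
    intro E hE
    rw [Finset.sum_eq_single (u E), Finset.sum_eq_single (v E)]
    · simp [mul_comm]
    · intro b _ hb
      simp [Ne.symm hb]
    · intro h
      exact absurd (Finset.mem_image_of_mem v hE) h
    · intro b _ hb
      simp [Ne.symm hb]
    · intro h
      exact absurd (Finset.mem_image_of_mem u hE) h
  rw [Finset.sum_congr rfl h1, Finset.sum_congr rfl h2, Finset.sum_congr rfl h3,
    Finset.sum_comm, Finset.sum_comm (s := T) (t := T.image u),
    Finset.sum_comm (s := T) (t := T.image v), Finset.sum_mul_sum]
  refine Finset.sum_congr rfl fun x _ => ?_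
  rw [Finset.sum_comm]
  refine Finset.sum_congr rfl fun y hy => ?_
  rw [← Finset.mul_sum, ← Finset.mul_sum, ← Finset.mul_sum, huv x y hy]
  ring

open scoped Classical in
theorem sl_marg {Ω X : Type*} (T : Finset Ω) (q : Ω → ℝ) (hq : ∑ E ∈ T, q E = 1)
    (L : ℕ → Ω → X) (I D : Finset ℕ) (hD : Disjoint I D)
    (hJ : ∀ g : ℕ → X, (∑ E ∈ T, if ∀ h ∈ I ∪ D, L h E = g h then q E else 0) =
      ∏ h ∈ I ∪ D, ∑ E ∈ T, if L h E = g h then q E else 0) (g : ℕ → X) :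
    (∑ E ∈ T, if ∀ h ∈ I, L h E = g h then q E else 0) =
      ∏ h ∈ I, ∑ E ∈ T, if L h E = g h then q E else 0 := by
  induction D using Finset.induction_on generalizing g with
  | empty => simpa using hJ g
  | insert a D ha ih =>
    rw [Finset.disjoint_insert_right] at hD
    refine ih hD.2 (fun g => ?_) g
    have haI : a ∉ I ∪ D := by simp [hD.1, ha]
    have key := fun x => hJ (Function.update g a x)
    have e1 : ∀ x, (∑ E ∈ T, if ∀ h ∈ I ∪ insert a D, L h E = Function.update g a x h
          then q E else 0) =
        ∑ E ∈ T, if L a E = x then (if ∀ h ∈ I ∪ D, L h E = g h then q E else 0) else 0 := by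
      intro x
      refine Finset.sum_congr rfl fun E _ => ?_
      rw [← ite_and]
      congr 1
      rw [Finset.union_insert, Finset.forall_mem_insert, Function.update_self]
      refine propext (and_congr_right fun _ => forall₂_congr fun h hh => ?_)
      have hne : h ≠ a := fun e => haI (e ▸ hh)
      rw [Function.update_of_ne hne]
    have e2 : ∀ x, (∏ h ∈ I ∪ insert a D, ∑ E ∈ T,
          if L h E = Function.update g a x h then q E else 0) =
        (∑ E ∈ T, if L a E = x then q E else 0) *
          ∏ h ∈ I ∪ D, ∑ E ∈ T, if L h E = g h then q E else 0 := by
      intro x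
      rw [Finset.union_insert, Finset.prod_insert haI, Function.update_self]
      congr 1
      refine Finset.prod_congr rfl fun h hh => ?_
      have hne : h ≠ a := fun e => haI (e ▸ hh)
      rw [Function.update_of_ne hne]
    have key2 := Finset.sum_congr (rfl : T.image (L a) = T.image (L a))
      (fun x _ => (e1 x).symm.trans ((key x).trans (e2 x)))
    rw [← Finset.sum_mul, Finset.sum_comm, Finset.sum_comm (s := T.image (L a))] at key2
    have e3 : ∀ w : Ω → ℝ, (∑ E ∈ T, ∑ x ∈ T.image (L a), if L a E = x then w E else 0) =
        ∑ E ∈ T, w E := by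
      intro w
      refine Finset.sum_congr rfl fun E hE => ?_
      rw [Finset.sum_ite_eq, if_pos (Finset.mem_image_of_mem _ hE)]
    rw [e3, e3, hq, one_mul] at key2
    exact key2

theorem sl_val_congr [Fintype S] [Fintype A] (H : ℕ) (E E' : Env S A)
    (pol : ℕ → S → A → ℝ) (k : ℕ) (hk : k ≤ H)
    (h : ∀ i ∈ Finset.Ioc (H - k) H, (E.1 i, E.2 i) = (E'.1 i, E'.2 i)) (s : S) :
    val H E.1 E.2 pol k s = val H E'.1 E'.2 pol k s := by
  induction k generalizing s with
  | zero => rfl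
  | succ k ih =>
    have h0 := h (H - k) (by simp; omega)
    rw [Prod.mk.injEq] at h0
    have ih' := ih (by omega) (fun i hi => h i (by simp at hi ⊢; omega))
    simp only [_root_.val, h0.1, h0.2, ih']

open scoped Classical in
theorem sl_mean [Fintype S] [Fintype A] (H : ℕ) (p : Env S A → ℝ) (T : Finset (Env S A))
    (hw : ∑ E ∈ T, p E ≠ 0) (hH : 1 ≤ H)
    (hlayer : ∀ g : ℕ → (S → A → S → ℝ) × (S → A → ℝ),
      (∑ E ∈ T, p E) ^ (H - 1) *
          (∑ E ∈ T,
            if ∀ h ∈ Finset.Icc 1 H, (E.1 h, E.2 h) = g h then p E else 0) =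
        ∏ h ∈ Finset.Icc 1 H,
          (∑ E ∈ T, if (E.1 h, E.2 h) = g h then p E else 0))
    (pol : ℕ → S → A → ℝ) (s : S) :
    ∑ E ∈ T, p E * val H E.1 E.2 pol H s =
      (∑ E ∈ T, p E) * val H (condP p T) (condR p T) pol H s := by
  set w := ∑ E ∈ T, p E with hwdef
  set q : Env S A → ℝ := fun E => p E / w with hqdef
  have hq : ∑ E ∈ T, q E = 1 := by
    rw [← Finset.sum_div, ← hwdef, div_self hw]
  let L : ℕ → Env S A → (S → A → S → ℝ) × (S → A → ℝ) := fun h E => (E.1 h, E.2 h)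
  have hite : ∀ (C : Env S A → Prop) [DecidablePred C], (∑ E ∈ T, if C E then q E else 0) =
      (∑ E ∈ T, if C E then p E else 0) / w := by
    intro C _
    rw [Finset.sum_div]
    refine Finset.sum_congr rfl fun E _ => ?_
    split_ifs <;> simp [hqdef]
  have hJ : ∀ g : ℕ → (S → A → S → ℝ) × (S → A → ℝ), (∑ E ∈ T, if ∀ h ∈ Finset.Icc 1 H, L h E = g h then q E else 0) =
      ∏ h ∈ Finset.Icc 1 H, ∑ E ∈ T, if L h E = g h then q E else 0 := by
    intro g
    rw [hite (fun E => ∀ h ∈ Finset.Icc 1 H, L h E = g h), Finset.prod_congr rfl (fun h _ => hite (fun E => L h E = g h)),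
      Finset.prod_div_distrib, Finset.prod_const, Nat.card_Icc, ← hlayer g]
    have : w ^ (H + 1 - 1) = w ^ (H - 1) * w := by
      rw [← pow_succ]; congr 1; omega
    rw [this, mul_div_mul_left _ _ (pow_ne_zero _ hw)]
  have hI : ∀ I ⊆ Finset.Icc 1 H, ∀ g : ℕ → (S → A → S → ℝ) × (S → A → ℝ), (∑ E ∈ T, if ∀ h ∈ I, L h E = g h then q E else 0) =
      ∏ h ∈ I, ∑ E ∈ T, if L h E = g h then q E else 0 := by
    intro I hIs g
    have := sl_marg T q hq L I (Finset.Icc 1 H \ I) Finset.disjoint_sdiff ?_ g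
    · convert this
    · rw [Finset.union_sdiff_of_subset hIs]
      intro g
      convert hJ g
  have main : ∀ k ≤ H, ∀ s, ∑ E ∈ T, q E * val H E.1 E.2 pol k s =
      val H (condP p T) (condR p T) pol k s := by
    intro k
    induction k with
    | zero => intro _ s; simp [_root_.val]
    | succ k ih =>
      intro hk s
      have ih := ih (by omega)
      have hR : ∀ a, ∑ E ∈ T, q E * E.2 (H - k) s a = condR p T (H - k) s a := by
        intro a
        simp only [condR, Finset.sum_div, hqdef]
        exact Finset.sum_congr rfl fun E _ => by rw [← hwdef]; ring
      have hP : ∀ a s', ∑ E ∈ T, q E * E.1 (H - k) s a s' = condP p T (H - k) s a s' := by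
        intro a s'
        simp only [condP, Finset.sum_div, hqdef]
        exact Finset.sum_congr rfl fun E _ => by rw [← hwdef]; ring
      set I := Finset.Ioc (H - k) H with hIdef
      have hnI : H - k ∉ I := by simp [hIdef]
      let v : Env S A → (I → (S → A → S → ℝ) × (S → A → ℝ)) := fun E i => L i E
      have hprod : ∀ a s', ∑ E ∈ T, q E * (E.1 (H - k) s a s' * val H E.1 E.2 pol k s') =
          condP p T (H - k) s a s' * val H (condP p T) (condR p T) pol k s' := by
        intro a s'
        rw [← hP, ← ih s']
        have hfac : Function.FactorsThrough (fun E : Env S A => val H E.1 E.2 pol k s') v := by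
          intro E E' hEE
          exact sl_val_congr H E E' pol k (by omega) (fun i hi => congrFun hEE ⟨i, hi⟩) s'
        have hg : ∀ E : Env S A, Function.extend v
            (fun E : Env S A => val H E.1 E.2 pol k s') 0 (v E) = val H E.1 E.2 pol k s' :=
          fun E => hfac.extend_apply 0 E
        have := sl_indep_pair T q (L (H - k)) v ?_ (fun x => x.1 s a s')
          (Function.extend v (fun E : Env S A => val H E.1 E.2 pol k s') 0)
        · simp only [hg] at this
          exact this
        · intro x y hy
          obtain ⟨E0, -, rfl⟩ := Finset.mem_image.1 hy
          let g : ℕ → (S → A → S → ℝ) × (S → A → ℝ) :=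
            Function.update (fun i => L i E0) (H - k) x
          have hgI : ∀ i ∈ I, g i = L i E0 := by
            intro i hi
            have hne : i ≠ H - k := fun e => hnI (e ▸ hi)
            exact Function.update_of_ne hne _ _
          have hg0 : g (H - k) = x := Function.update_self _ _ _
          have hv : ∀ E, v E = v E0 ↔ ∀ i ∈ I, L i E = g i := by
            intro E
            constructor
            · intro h i hi
              rw [hgI i hi]
              exact congrFun h ⟨i, hi⟩
            · intro h
              funext i
              exact (h i.1 i.2).trans (hgI i.1 i.2)
          have hsub : I ⊆ Finset.Icc 1 H := by
            intro i hi
            simp only [hIdef, Finset.mem_Ioc, Finset.mem_Icc] at hi ⊢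
            omega
          have a1 := hI (insert (H - k) I) (Finset.insert_subset (by simp; omega) hsub) g
          have a2 := hI I hsub g
          rw [Finset.prod_insert hnI, ← a2] at a1
          simp only [Finset.forall_mem_insert, hg0] at a1
          simp only [hv]
          convert a1
      simp only [_root_.val]
      simp only [Finset.mul_sum (s := (Finset.univ : Finset A))]
      rw [Finset.sum_comm]
      refine Finset.sum_congr rfl fun a _ => ?_
      rw [← hR]
      simp only [← hprod]
      rw [Finset.sum_comm, ← Finset.sum_add_distrib, Finset.mul_sum]
      refine Finset.sum_congr rfl fun E _ => ?_
      rw [← Finset.mul_sum]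
      ring
  rw [← main H le_rfl s, Finset.mul_sum]
  refine Finset.sum_congr rfl fun E _ => ?_
  simp only [hqdef]
  field_simp

open scoped Classical in
/-- surrogate environment learning lemma.  Replacing the true
environment by the conditional-mean environment of its partition class changes the
Thompson-Sampling-type expected regret by at most `ε`.  Here `E, E'` are i.i.d. with
law `p` on the finite set `Θ`, so expectations are weighted double sums. -/
theorem surrogate_learning
    [Fintype S] [Fintype A] [Nonempty S] [Nonempty A]
    (H : ℕ) (hH : 1 ≤ H) (s₁ : S)
    (Θ : Finset (Env S A)) (hΘne : Θ.Nonempty)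
    (hΘ : ∀ E ∈ Θ, IsKernel H E.1 ∧ IsReward H E.2)
    (p : Env S A → ℝ) (hp0 : ∀ E, 0 ≤ p E) (hp1 : ∑ E ∈ Θ, p E = 1)
    (πstar : Env S A → (ℕ → S → A → ℝ))
    (hπstar : ∀ E ∈ Θ, IsPolicy H (πstar E))
    (hopt : ∀ E ∈ Θ, ∀ pol, IsPolicy H pol →
      val H E.1 E.2 pol H s₁ ≤ val H E.1 E.2 (πstar E) H s₁)
    (ε : ℝ) (K : ℕ) (T : Fin K → Finset (Env S A))
    (hTsub : ∀ k, T k ⊆ Θ)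
    (hpart : ∀ E ∈ Θ, ∃! k, E ∈ T k)
    (ζ : Env S A → Fin K) (hζ : ∀ E ∈ Θ, E ∈ T (ζ E))
    -- (i) ε-value property of the partition
    (hval : ∀ k, ∀ E ∈ T k, ∀ E'' ∈ T k,
      val H E.1 E.2 (πstar E) H s₁ - val H E''.1 E''.2 (πstar E) H s₁ ≤ ε)
    -- (ii) layered property: under `p(· | Θ_k)` the layers `(P_h, r_h)`, `h = 1,…,H`,
    -- are mutually independent
    (hlayer : ∀ k, ∀ g : ℕ → (S → A → S → ℝ) × (S → A → ℝ),
      (∑ E ∈ T k, p E) ^ (H - 1) *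
          (∑ E ∈ T k,
            if ∀ h ∈ Finset.Icc 1 H, (E.1 h, E.2 h) = g h then p E else 0) =
        ∏ h ∈ Finset.Icc 1 H,
          (∑ E ∈ T k, if (E.1 h, E.2 h) = g h then p E else 0)) :
    (∑ E ∈ Θ, ∑ E' ∈ Θ, p E * p E' *
        (val H E.1 E.2 (πstar E) H s₁ - val H E.1 E.2 (πstar E') H s₁)) -
      (∑ E ∈ Θ, ∑ E' ∈ Θ, p E * p E' *
        (val H (condP p (T (ζ E))) (condR p (T (ζ E))) (πstar E) H s₁ -
          val H (condP p (T (ζ E))) (condR p (T (ζ E))) (πstar E') H s₁)) ≤ ε := by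
  have hTk : ∀ k, Θ.filter (fun E => ζ E = k) = T k := by
    intro k
    ext E
    rw [Finset.mem_filter]
    constructor
    · rintro ⟨h, rfl⟩
      exact hζ E h
    · intro h
      have hE := hTsub k h
      exact ⟨hE, (hpart E hE).unique (hζ E hE) h⟩
  have hsum : ∀ F : Env S A → ℝ, ∑ E ∈ Θ, F E = ∑ k, ∑ E ∈ T k, F E := by
    intro F
    rw [← Finset.sum_fiberwise Θ ζ F]
    simp only [hTk]
  have hzeta : ∀ k, ∀ E ∈ T k, ζ E = k := by
    intro k E hE
    rw [← hTk k, Finset.mem_filter] at hE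
    exact hE.2
  have hmean : ∀ k pol, ∑ E ∈ T k, p E * val H E.1 E.2 pol H s₁ =
      (∑ E ∈ T k, p E) * val H (condP p (T k)) (condR p (T k)) pol H s₁ := by
    intro k pol
    by_cases hw : ∑ E ∈ T k, p E = 0
    · have h0 := (Finset.sum_eq_zero_iff_of_nonneg (fun E _ => hp0 E)).1 hw
      rw [hw, zero_mul]
      exact Finset.sum_eq_zero fun E hE => by rw [h0 E hE, zero_mul]
    · exact sl_mean H p (T k) hw hH (hlayer k) pol s₁
  have hcross : ∀ pol, ∑ E ∈ Θ, p E * (val H E.1 E.2 pol H s₁ -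
      val H (condP p (T (ζ E))) (condR p (T (ζ E))) pol H s₁) = 0 := by
    intro pol
    rw [hsum]
    refine Finset.sum_eq_zero fun k _ => ?_
    have : ∀ E ∈ T k, p E * (val H E.1 E.2 pol H s₁ -
        val H (condP p (T (ζ E))) (condR p (T (ζ E))) pol H s₁) =
        p E * val H E.1 E.2 pol H s₁ -
          p E * val H (condP p (T k)) (condR p (T k)) pol H s₁ := by
      intro E hE
      rw [hzeta k E hE, mul_sub]
    rw [Finset.sum_congr rfl this, Finset.sum_sub_distrib, hmean, Finset.sum_mul, sub_self]
  have hdiag : ∀ E ∈ Θ, p E * (val H E.1 E.2 (πstar E) H s₁ -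
      val H (condP p (T (ζ E))) (condR p (T (ζ E))) (πstar E) H s₁) ≤ p E * ε := by
    intro E hE
    have hET := hζ E hE
    rcases (hp0 E).eq_or_lt with h0 | h0
    · simp [← h0]
    refine mul_le_mul_of_nonneg_left ?_ h0.le
    have hw : 0 < ∑ E ∈ T (ζ E), p E :=
      Finset.sum_pos' (fun E _ => hp0 E) ⟨E, hET, h0⟩
    refine le_of_mul_le_mul_left ?_ hw
    rw [mul_sub, ← hmean, Finset.sum_mul, Finset.sum_mul, ← Finset.sum_sub_distrib]
    refine Finset.sum_le_sum fun E'' hE'' => ?_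
    rw [← mul_sub]
    exact mul_le_mul_of_nonneg_left (hval _ E hET E'' hE'') (hp0 _)
  have hrew : (∑ E ∈ Θ, ∑ E' ∈ Θ, p E * p E' *
        (val H E.1 E.2 (πstar E) H s₁ - val H E.1 E.2 (πstar E') H s₁)) -
      (∑ E ∈ Θ, ∑ E' ∈ Θ, p E * p E' *
        (val H (condP p (T (ζ E))) (condR p (T (ζ E))) (πstar E) H s₁ -
          val H (condP p (T (ζ E))) (condR p (T (ζ E))) (πstar E') H s₁)) =
      (∑ E ∈ Θ, ∑ E' ∈ Θ, p E' * (p E * (val H E.1 E.2 (πstar E) H s₁ -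
        val H (condP p (T (ζ E))) (condR p (T (ζ E))) (πstar E) H s₁))) -
      ∑ E ∈ Θ, ∑ E' ∈ Θ, p E' * (p E * (val H E.1 E.2 (πstar E') H s₁ -
        val H (condP p (T (ζ E))) (condR p (T (ζ E))) (πstar E') H s₁)) := by
    simp only [← Finset.sum_sub_distrib]
    refine Finset.sum_congr rfl fun E _ => Finset.sum_congr rfl fun E' _ => ?_
    ring
  rw [hrew, Finset.sum_comm (f := fun E E' => p E' * (p E * (val H E.1 E.2 (πstar E') H s₁ -
        val H (condP p (T (ζ E))) (condR p (T (ζ E))) (πstar E') H s₁)))]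
  simp only [← Finset.mul_sum, hcross, mul_zero, Finset.sum_const_zero, sub_zero]
  simp only [← Finset.sum_mul, hp1, one_mul]
  calc _ ≤ ∑ E ∈ Θ, p E * ε := Finset.sum_le_sum hdiag
    _ = ε := by rw [← Finset.sum_mul, hp1, one_mul]
end
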